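/- arXiv:1507.05367 — 4 statements merged into one kernel-verified Lean document; each statement's English description precedes it below -/
import Mathlib

section
/- Let G_1,…,G_M ⊆ {1,…,n}, let 1 ≤ p < ∞, and let x ∈ ℝ^n. Then the atomic-norm value inf{ Σ_{i=1}^K c_i : K ∈ ℕ, c_i ≥ 0, x = Σ_{i=1}^K c_i a_i, each a_i ∈ ℝ^n satisfies supp(a_i) ⊆ G_{j(i)} for some j(i) and ‖a_i‖_p = 1 } equals the latent group norm inf{ Σ_{j=1}^M ‖v_j‖_p : v_1,…,v_M ∈ ℝ^n, supp(v_j) ⊆ G_j for each j, Σ_{j=1}^M v_j = x } (with the convention that both infima are +∞ when the corresponding feasible set is empty). -/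
/-- The `ℓ_p` norm of a vector in `ℝ^n`, for `p ∈ [1, ∞)`. -/
noncomputable def lpNorm {n : ℕ} (p : ℝ) (v : Fin n → ℝ) : ℝ :=
  (∑ i, |v i| ^ p) ^ (1 / p)

/-!
Collecting the atoms of a decomposition group by group gives a latent decomposition which, by the
triangle inequality, costs no more. Conversely, every nonzero part `v` of a latent decomposition is
`‖v‖` times the atom `v / ‖v‖`, so normalizing the nonzero parts gives an atomic decomposition of
the same cost. Beyond the triangle inequality and homogeneity, this only uses that the vectors
supported on a group form a convex cone on which the norm is definite.
-/

open Finset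

section Cones

variable {E ι κ : Type*} [AddCommGroup E] [Module ℝ E] [Fintype κ]
  {N : Seminorm ℝ E} {V : ι → PointedCone ℝ E} {x : E}

/-- The atomic norm whose atoms are the `N`-unit vectors of the cones `V j`. It is valued in `ℝ≥0∞`,
being `∞` at vectors that are not sums of multiples of atoms. -/
noncomputable def atomicNorm (N : Seminorm ℝ E) (V : ι → PointedCone ℝ E) (x : E) : ENNReal :=
  sInf {t | ∃ (K : ℕ) (c : Fin K → ℝ) (a : Fin K → E), (∀ i, 0 ≤ c i) ∧ (∀ i, ∃ j, a i ∈ V j) ∧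
    (∀ i, N (a i) = 1) ∧ x = ∑ i, c i • a i ∧ t = ENNReal.ofReal (∑ i, c i)}

theorem atomicNorm_sum_smul_le {c : κ → ℝ} {a : κ → E}
    (hc : ∀ k, 0 ≤ c k) (ha : ∀ k, ∃ j, a k ∈ V j) (hN : ∀ k, N (a k) = 1) :
    atomicNorm N V (∑ k, c k • a k) ≤ ENNReal.ofReal (∑ k, c k) := by
  let e := (Fintype.equivFin κ).symm
  exact sInf_le ⟨_, c ∘ e, a ∘ e, fun i => hc (e i), fun i => ha (e i), fun i => hN (e i),
    (e.sum_comp fun k => c k • a k).symm, congrArg ENNReal.ofReal (e.sum_comp c).symm⟩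

variable [Fintype ι]

/-- The latent norm: the least total `N`-size of a decomposition of `x` with one part in each of the
cones `V j`. It is valued in `ℝ≥0∞`, being `∞` at vectors without such a decomposition. -/
noncomputable def latentNorm (N : Seminorm ℝ E) (V : ι → PointedCone ℝ E) (x : E) : ENNReal :=
  sInf {t | ∃ v : ι → E, (∀ j, v j ∈ V j) ∧ x = ∑ j, v j ∧ t = ENNReal.ofReal (∑ j, N (v j))}

theorem latentNorm_sum_le {w : κ → E} (hw : ∀ k, ∃ j, w k ∈ V j) :
    latentNorm N V (∑ k, w k) ≤ ENNReal.ofReal (∑ k, N (w k)) := by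
  classical
  choose g hg using hw
  have collected_mem (j : ι) : ∑ k with g k = j, w k ∈ V j :=
    sum_mem fun k hk => (mem_filter.mp hk).2 ▸ hg k
  have collected_cost : ∑ j, N (∑ k with g k = j, w k) ≤ ∑ k, N (w k) :=
    calc ∑ j, N (∑ k with g k = j, w k)
      _ ≤ ∑ j, ∑ k with g k = j, N (w k) := sum_le_sum fun j _ =>
          le_sum_of_subadditive N (map_zero N).le (map_add_le_add N) _ _
      _ = ∑ k, N (w k) := sum_fiberwise _ _ _
  exact sInf_le_of_le ⟨_, collected_mem, (sum_fiberwise _ g w).symm, rfl⟩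
    (ENNReal.ofReal_le_ofReal collected_cost)

theorem latentNorm_le_atomicNorm : latentNorm N V x ≤ atomicNorm N V x := by
  refine le_sInf ?_
  rintro _ ⟨K, c, a, hc, ha, hN, rfl, rfl⟩
  have cost_eq (i : Fin K) : N (c i • a i) = c i := by
    rw [map_smul_eq_mul, hN, mul_one, Real.norm_of_nonneg (hc i)]
  simpa only [cost_eq] using
    latentNorm_sum_le (N := N) fun i => (ha i).imp fun j hj => (V j).smul_mem (hc i) hj

theorem atomicNorm_le_latentNorm (hN : ∀ j, ∀ v ∈ V j, N v = 0 → v = 0) :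
    atomicNorm N V x ≤ latentNorm N V x := by
  refine le_sInf ?_
  rintro _ ⟨v, hv, rfl, rfl⟩
  let κ := {j // N (v j) ≠ 0}
  let a (k : κ) : E := (N (v k))⁻¹ • v k
  have a_mem (k : κ) : ∃ j, a k ∈ V j :=
    ⟨k, (V k).smul_mem (inv_nonneg.mpr (apply_nonneg N _)) (hv k)⟩
  have a_norm (k : κ) : N (a k) = 1 := by
    rw [map_smul_eq_mul, norm_inv, Real.norm_of_nonneg (apply_nonneg N _), inv_mul_cancel₀ k.2]
  have sum_eq : ∑ k : κ, N (v k) • a k = ∑ j, v j :=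
    Fintype.sum_of_injective Subtype.val Subtype.val_injective _ _
      (fun j hj => hN j _ (hv j) (by simpa using hj)) (fun k => smul_inv_smul₀ k.2 _)
  have cost_eq : ∑ k : κ, N (v k) = ∑ j, N (v j) :=
    Fintype.sum_of_injective Subtype.val Subtype.val_injective _ _
      (fun j hj => by simpa using hj) (fun _ => rfl)
  rw [← sum_eq, ← cost_eq]
  exact atomicNorm_sum_smul_le (fun k => apply_nonneg N _) a_mem a_norm

theorem stmt_1_general (hN : ∀ j, ∀ v ∈ V j, N v = 0 → v = 0) :
    atomicNorm N V x = latentNorm N V x :=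
  (atomicNorm_le_latentNorm hN).antisymm latentNorm_le_atomicNorm

end Cones

section LpNorm

variable {n : ℕ} {p : ℝ}

theorem lpNorm_eq_norm_toLp (hp : 0 < p) (v : Fin n → ℝ) :
    lpNorm p v = ‖WithLp.toLp (ENNReal.ofReal p) v‖ := by
  have toReal_p : (ENNReal.ofReal p).toReal = p := ENNReal.toReal_ofReal hp.le
  simp only [lpNorm, PiLp.norm_eq_sum (toReal_p.symm ▸ hp), toReal_p, Real.norm_eq_abs]

/-- The `ℓ_p` norm on `ℝ^n` as a seminorm. -/
noncomputable def lpSeminorm (n : ℕ) (hp : 1 ≤ p) : Seminorm ℝ (Fin n → ℝ) :=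
  have : Fact (1 ≤ ENNReal.ofReal p) := ⟨ENNReal.one_le_ofReal.mpr hp⟩
  have hp₀ : 0 < p := one_pos.trans_le hp
  .of (lpNorm p)
    (fun v w => by simpa only [lpNorm_eq_norm_toLp hp₀, WithLp.toLp_add] using norm_add_le _ _)
    (fun c v => by simpa only [lpNorm_eq_norm_toLp hp₀, WithLp.toLp_smul] using norm_smul _ _)

@[simp]
theorem lpSeminorm_apply (hp : 1 ≤ p) (v : Fin n → ℝ) : lpSeminorm n hp v = lpNorm p v :=
  rfl

theorem lpNorm_eq_zero_iff (hp : 0 < p) {v : Fin n → ℝ} : lpNorm p v = 0 ↔ v = 0 := by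
  have rpow_nonneg (i : Fin n) : 0 ≤ |v i| ^ p := Real.rpow_nonneg (abs_nonneg _) p
  rw [lpNorm, Real.rpow_eq_zero (sum_nonneg fun i _ => rpow_nonneg i) (one_div_ne_zero hp.ne'),
    sum_eq_zero_iff_of_nonneg fun i _ => rpow_nonneg i, funext_iff]
  simp [Real.rpow_eq_zero (abs_nonneg _) hp.ne']

end LpNorm

/-- **Atomic norm = latent group norm.** For groups `G_1, …, G_M ⊆ {1,…,n}` and `1 ≤ p < ∞`,
the infimum of `Σ c_i` over all decompositions `x = Σ c_i a_i` with `c_i ≥ 0` and each atom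
`a_i` an `ℓ_p`-unit-norm vector supported on some group, equals the infimum of
`Σ_j ‖v_j‖_p` over decompositions `x = Σ_j v_j` with `supp(v_j) ⊆ G_j`. Both infima are
taken in `ℝ≥0∞` so that they are `+∞` when the feasible set is empty. -/
theorem stmt_1 (n M : ℕ) (Gr : Fin M → Finset (Fin n)) (p : ℝ) (hp : 1 ≤ p)
    (x : Fin n → ℝ) :
    sInf { t : ENNReal | ∃ (K : ℕ) (c : Fin K → ℝ) (a : Fin K → (Fin n → ℝ)),
        (∀ i, 0 ≤ c i) ∧
        (∀ i, ∃ j : Fin M, ∀ l : Fin n, a i l ≠ 0 → l ∈ Gr j) ∧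
        (∀ i, lpNorm p (a i) = 1) ∧
        (∀ l, x l = ∑ i, c i * a i l) ∧
        t = ENNReal.ofReal (∑ i, c i) } =
    sInf { t : ENNReal | ∃ v : Fin M → (Fin n → ℝ),
        (∀ j, ∀ l, v j l ≠ 0 → l ∈ Gr j) ∧
        (∀ l, x l = ∑ j, v j l) ∧
        t = ENNReal.ofReal (∑ j, lpNorm p (v j)) } := by
  simpa [atomicNorm, latentNorm, Pi.mem_spanSubset_iff, funext_iff, not_imp_comm] using
    stmt_1_general (N := lpSeminorm n hp) (V := fun j => .ofSubmodule (Pi.spanSubset ℝ (Gr j)))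
      (x := x) fun _ _ _ => (lpNorm_eq_zero_iff (one_pos.trans_le hp)).mp
end

section
/- Let f : ℝ^n → ℝ be differentiable with L-Lipschitz continuous gradient (L > 0), let R be a real-valued set function on subsets of {1,…,n}, and let λ ≥ 0. Given x ∈ ℝ^n, set w = x − (1/L)∇f(x). Suppose S ⊆ {1,…,n} minimizes the quantity λR(S') − (L/2) Σ_{j∈S'} w_j² over all subsets S' ⊆ {1,…,n}, and let x⁺ = w_S (the restriction of w to S, zero elsewhere). Then f(x⁺) + λR(S) ≤ f(x) + λR(supp(x)). -/
open scoped Classical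

/-!
After completing the square, the quadratic upper model of `f` at `x` is
`f x + L / 2 * (‖y - w‖ ^ 2 - ‖x - w‖ ^ 2)`, where `w` is the gradient step from `x`. At `y = w_S`
the first square is the energy of `w` off `S`, while the second is at least the energy of `w` off
the support of `x`. Hence `f w_S - f x` is at most `L / 2` times the energy of `w` on the support of
`x` minus that on `S`, and the minimality of `S` bounds this by the drop in the penalty.
-/

theorem le_add_mul_add_sq_of_deriv_le_affine {φ φ' : ℝ → ℝ} {a b c K : ℝ} (hab : a ≤ b)
    (hcont : ContinuousOn φ (Set.Icc a b)) (hφ : ∀ t ∈ Set.Ioo a b, HasDerivAt φ (φ' t) t)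
    (hφ' : ∀ t ∈ Set.Ioo a b, φ' t ≤ c + K * (t - a)) :
    φ b ≤ φ a + c * (b - a) + K / 2 * (b - a) ^ 2 := by
  let q : ℝ → ℝ := fun t => c * (t - a) + K / 2 * (t - a) ^ 2
  have hq (t : ℝ) : HasDerivAt q (c + K * (t - a)) t := by
    have hsub : HasDerivAt (fun s => s - a) 1 t := (hasDerivAt_id t).sub_const a
    refine ((hsub.const_mul c).add ((hsub.pow 2).const_mul (K / 2))).congr_deriv ?_
    push_cast
    ring
  have hanti : AntitoneOn (φ - q) (Set.Icc a b) := by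
    have hqcont : ContinuousOn q (Set.Icc a b) := fun t _ => (hq t).continuousAt.continuousWithinAt
    refine antitoneOn_of_hasDerivWithinAt_nonpos (convex_Icc a b) (hcont.sub hqcont)
      (f' := fun t => φ' t - (c + K * (t - a))) ?_ ?_ <;> rw [interior_Icc]
    · exact fun t ht => ((hφ t ht).sub (hq t)).hasDerivWithinAt
    · exact fun t ht => sub_nonpos.2 (hφ' t ht)
  have hle := hanti (Set.left_mem_Icc.2 hab) (Set.right_mem_Icc.2 hab) hab
  simp only [Pi.sub_apply, q] at hle
  linarith

section Gradient

section Seminormed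

variable {E : Type*} [SeminormedAddCommGroup E] [InnerProductSpace ℝ E]

theorem inner_le_mul_sq_of_norm_le_mul {u v : E} {L : ℝ} (h : ‖u‖ ≤ L * ‖v‖) :
    inner ℝ u v ≤ L * ‖v‖ ^ 2 :=
  calc
    inner ℝ u v ≤ ‖u‖ * ‖v‖ := real_inner_le_norm u v
    _ ≤ L * ‖v‖ * ‖v‖ := by gcongr
    _ = L * ‖v‖ ^ 2 := by ring

theorem inner_smul_sub_add_sq_norm_sub (L : ℝ) (w x y : E) :
    inner ℝ (L • (x - w)) (y - x) + L / 2 * ‖y - x‖ ^ 2 =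
      L / 2 * (‖y - w‖ ^ 2 - ‖x - w‖ ^ 2) := by
  rw [← sub_add_sub_cancel' x w y, norm_add_sq_real, real_inner_smul_left]
  ring

end Seminormed

variable {E : Type*} [NormedAddCommGroup E] [InnerProductSpace ℝ E] [CompleteSpace E]
  {f : E → ℝ} {f' : E → E} {L : ℝ} {x y : E}

theorem hasDerivAt_comp_add_smul_of_hasGradientAt {g d : E} {t : ℝ}
    (h : HasGradientAt f g (x + t • d)) :
    HasDerivAt (fun s : ℝ => f (x + s • d)) (inner ℝ g d) t := by
  have hline : HasDerivAt (fun s : ℝ => x + s • d) d t := by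
    simpa using ((hasDerivAt_id t).smul_const d).const_add x
  have hcomp := h.hasFDerivAt.comp_hasDerivAt t hline
  rwa [InnerProductSpace.toDual_apply_apply] at hcomp

theorem le_add_inner_add_sq_of_inner_gradient_sub_le
    (hf : ∀ z ∈ segment ℝ x y, HasGradientAt f (f' z) z)
    (hcurv : ∀ z ∈ segment ℝ x y, inner ℝ (f' z - f' x) (z - x) ≤ L * ‖z - x‖ ^ 2) :
    f y ≤ f x + inner ℝ (f' x) (y - x) + L / 2 * ‖y - x‖ ^ 2 := by
  set d := y - x
  have hmem {t : ℝ} (ht : t ∈ Set.Icc (0 : ℝ) 1) : x + t • d ∈ segment ℝ x y := by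
    rw [segment_eq_image']
    exact Set.mem_image_of_mem _ ht
  have hderiv (t : ℝ) (ht : t ∈ Set.Icc (0 : ℝ) 1) :
      HasDerivAt (fun s : ℝ => f (x + s • d)) (inner ℝ (f' (x + t • d)) d) t :=
    hasDerivAt_comp_add_smul_of_hasGradientAt (hf _ (hmem ht))
  have hslope (t : ℝ) (ht : t ∈ Set.Ioo (0 : ℝ) 1) :
      inner ℝ (f' (x + t • d)) d ≤ inner ℝ (f' x) d + L * ‖d‖ ^ 2 * (t - 0) := by
    have h := hcurv _ (hmem (Set.Ioo_subset_Icc_self ht))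
    rw [add_sub_cancel_left, inner_smul_right, inner_sub_left, norm_smul, mul_pow,
      Real.norm_eq_abs, sq_abs] at h
    have hdiv : inner ℝ (f' (x + t • d)) d - inner ℝ (f' x) d ≤ t * (L * ‖d‖ ^ 2) :=
      le_of_mul_le_mul_left (h.trans_eq (by ring)) ht.1
    linarith
  have hle := le_add_mul_add_sq_of_deriv_le_affine zero_le_one
    (fun t ht => (hderiv t ht).continuousAt.continuousWithinAt)
    (fun t ht => hderiv t (Set.Ioo_subset_Icc_self ht)) hslope
  have hend : x + d = y := add_sub_cancel x y
  simp only [one_smul, zero_smul, add_zero, sub_zero, mul_one, one_pow, hend] at hle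
  linarith

theorem le_add_sq_norm_sub_gradient_step (hL : L ≠ 0)
    (hf : ∀ z ∈ segment ℝ x y, HasGradientAt f (f' z) z)
    (hcurv : ∀ z ∈ segment ℝ x y, inner ℝ (f' z - f' x) (z - x) ≤ L * ‖z - x‖ ^ 2)
    {w : E} (hw : w = x - (1 / L) • f' x) :
    f y ≤ f x + L / 2 * (‖y - w‖ ^ 2 - ‖x - w‖ ^ 2) := by
  have hgrad : L • (x - w) = f' x := by
    rw [hw, sub_sub_cancel, one_div, smul_inv_smul₀ hL]
  have hdescent := le_add_inner_add_sq_of_inner_gradient_sub_le hf hcurv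
  rwa [add_assoc, ← hgrad, inner_smul_sub_add_sq_norm_sub] at hdescent

end Gradient

section CoordRestrict

variable {ι : Type*} [DecidableEq ι] {E : ι → Type*}

/-- The restriction `w_S` of a vector `w` of an `ℓ²` product to the index set `S`: it agrees with
`w` on `S` and vanishes outside `S`. The coordinates of `w` may themselves be vectors (blocks). -/
def coordRestrict [∀ i, Zero (E i)] (S : Finset ι) (w : PiLp 2 E) : PiLp 2 E :=
  WithLp.toLp 2 fun i => if i ∈ S then w i else 0

theorem coordRestrict_apply [∀ i, Zero (E i)] (S : Finset ι) (w : PiLp 2 E) (i : ι) :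
    coordRestrict S w i = if i ∈ S then w i else 0 :=
  rfl

variable [Fintype ι]

section Seminormed

variable [∀ i, SeminormedAddCommGroup (E i)]

theorem sq_norm_coordRestrict_sub (S : Finset ι) (w : PiLp 2 E) :
    ‖coordRestrict S w - w‖ ^ 2 = ∑ i ∈ Sᶜ, ‖w i‖ ^ 2 := by
  rw [PiLp.norm_sq_eq_of_L2, ← Finset.sum_add_sum_compl S, Finset.sum_eq_zero, zero_add]
  · refine Finset.sum_congr rfl fun i hi => ?_
    simp [coordRestrict_apply, Finset.mem_compl.1 hi]
  · intro i hi
    simp [coordRestrict_apply, hi]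

theorem sum_compl_sq_norm_le_sq_norm_sub {T : Finset ι} {x : PiLp 2 E}
    (hx : ∀ i ∉ T, x i = 0) (w : PiLp 2 E) :
    ∑ i ∈ Tᶜ, ‖w i‖ ^ 2 ≤ ‖x - w‖ ^ 2 :=
  calc
    ∑ i ∈ Tᶜ, ‖w i‖ ^ 2 = ∑ i ∈ Tᶜ, ‖(x - w) i‖ ^ 2 :=
      Finset.sum_congr rfl fun i hi => by simp [hx i (Finset.mem_compl.1 hi)]
    _ ≤ ∑ i, ‖(x - w) i‖ ^ 2 :=
      Finset.sum_le_univ_sum_of_nonneg fun i => sq_nonneg _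
    _ = ‖x - w‖ ^ 2 := (PiLp.norm_sq_eq_of_L2 E (x - w)).symm

theorem sq_norm_coordRestrict_sub_sub_le (S : Finset ι) {T : Finset ι} {x : PiLp 2 E}
    (hx : ∀ i ∉ T, x i = 0) (w : PiLp 2 E) :
    ‖coordRestrict S w - w‖ ^ 2 - ‖x - w‖ ^ 2 ≤
      ∑ i ∈ T, ‖w i‖ ^ 2 - ∑ i ∈ S, ‖w i‖ ^ 2 := by
  have hS := Finset.sum_add_sum_compl S fun i => ‖w i‖ ^ 2
  have hT := Finset.sum_add_sum_compl T fun i => ‖w i‖ ^ 2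
  linarith [sq_norm_coordRestrict_sub S w, sum_compl_sq_norm_le_sq_norm_sub hx w]

end Seminormed

theorem stmt_6_general [∀ i, NormedAddCommGroup (E i)] [∀ i, InnerProductSpace ℝ (E i)]
    [∀ i, CompleteSpace (E i)] {f : PiLp 2 E → ℝ} {f' : PiLp 2 E → PiLp 2 E}
    {L : ℝ} (hL : 0 < L) {x w : PiLp 2 E}
    (hw : w = x - (1 / L) • f' x) {S T : Finset ι}
    (hf : ∀ z ∈ segment ℝ x (coordRestrict S w), HasGradientAt f (f' z) z)
    (hcurv : ∀ z ∈ segment ℝ x (coordRestrict S w),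
      inner ℝ (f' z - f' x) (z - x) ≤ L * ‖z - x‖ ^ 2)
    (P : Finset ι → ℝ) (hx : ∀ i ∉ T, x i = 0)
    (hST : P S - L / 2 * ∑ i ∈ S, ‖w i‖ ^ 2 ≤ P T - L / 2 * ∑ i ∈ T, ‖w i‖ ^ 2) :
    f (coordRestrict S w) + P S ≤ f x + P T := by
  have hmodel := le_add_sq_norm_sub_gradient_step hL.ne' hf hcurv hw
  have henergy := mul_le_mul_of_nonneg_left (sq_norm_coordRestrict_sub_sub_le S hx w)
    (half_pos hL).le
  linarith

end CoordRestrict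

/-- **Descent guarantee of the majorization–minimization scheme.** Let `f : ℝ^n → ℝ` be
differentiable with `L`-Lipschitz continuous gradient (`L > 0`), `R` a real-valued set
function on subsets of `{1,…,n}`, `λ ≥ 0`, and given `x`, set `w = x - (1/L)∇f(x)`. If
`S` minimizes `λ R(S') - (L/2) Σ_{j∈S'} w_j²` over all subsets `S'`, and `x⁺ = w_S`, then
`f(x⁺) + λ R(S) ≤ f(x) + λ R(supp(x))`. -/
theorem stmt_6 (n : ℕ) (f : EuclideanSpace ℝ (Fin n) → ℝ)
    (f' : EuclideanSpace ℝ (Fin n) → EuclideanSpace ℝ (Fin n))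
    (hf : ∀ y, HasGradientAt f (f' y) y)
    (L : ℝ) (hL : 0 < L)
    (hlip : ∀ v w : EuclideanSpace ℝ (Fin n), ‖f' v - f' w‖ ≤ L * ‖v - w‖)
    (R : Finset (Fin n) → ℝ) (lam : ℝ) (hlam : 0 ≤ lam)
    (x w : EuclideanSpace ℝ (Fin n)) (hw : w = x - (1 / L) • f' x)
    (S : Finset (Fin n))
    (hS : ∀ S' : Finset (Fin n),
      lam * R S - (L / 2) * ∑ j ∈ S, (w j) ^ 2 ≤
        lam * R S' - (L / 2) * ∑ j ∈ S', (w j) ^ 2)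
    (xp : EuclideanSpace ℝ (Fin n)) (hxp : ∀ j, xp j = if j ∈ S then w j else 0) :
    f xp + lam * R S ≤ f x + lam * R (Finset.univ.filter fun j => x j ≠ 0) := by
  obtain rfl : xp = coordRestrict S w := by
    ext j
    rw [hxp, coordRestrict_apply]
  exact stmt_6_general hL hw (fun z _ => hf z)
    (fun z _ => inner_le_mul_sq_of_norm_le_mul (hlip z x)) (fun A => lam * R A) (by simp)
    (by simpa only [Real.norm_eq_abs, sq_abs] using hS _)
end

section
/- Let R be a submodular set function on subsets of {1,…,n} with R(∅) = 0. Then its Lovász extension r : ℝ^n → ℝ is a convex function. -/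
/-- The sum `Σ_k x_{σ(k)} (R({σ(1),…,σ(k)}) - R({σ(1),…,σ(k-1)}))` defining the Lovász
extension of the set function `R` at `x`, computed with the ordering `σ`. -/
noncomputable def lovSum {n : ℕ} (R : Finset (Fin n) → ℝ) (x : Fin n → ℝ)
    (σ : Equiv.Perm (Fin n)) : ℝ :=
  ∑ k : Fin n, x (σ k) * (R ((Finset.Iic k).image ⇑σ) - R ((Finset.Iio k).image ⇑σ))

/-!
For submodular `R`, the value `r x` is the maximum of the linear functionals `x ↦ x ⬝ᵥ w` over the
base polytope of `R` (Edmonds): the increments of `R` along any ordering of the ground set form a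
base, and Abel summation shows that those along an ordering sorting `x` maximize `x ⬝ᵥ w`. A
pointwise maximum of linear functionals is convex.
-/

namespace LovaszExtension

open Finset

theorem convexOn_of_isLUB {𝕜 E β κ : Type*} [Semiring 𝕜] [PartialOrder 𝕜] [AddCommMonoid E]
    [Module 𝕜 E] [AddCommMonoid β] [PartialOrder β] [IsOrderedAddMonoid β] [Module 𝕜 β]
    [PosSMulMono 𝕜 β] {s : Set E} {B : Set κ} {f : κ → E → β} {g : E → β}
    (hs : Convex 𝕜 s) (hf : ∀ i ∈ B, ConvexOn 𝕜 s (f i))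
    (hg : ∀ x ∈ s, IsLUB ((f · x) '' B) (g x)) : ConvexOn 𝕜 s g := by
  refine ⟨hs, fun x hx y hy a b ha hb hab => (hg _ (hs hx hy ha hb hab)).2 ?_⟩
  rintro _ ⟨i, hi, rfl⟩
  calc f i (a • x + b • y) ≤ a • f i x + b • f i y := (hf i hi).2 hx hy ha hb hab
    _ ≤ a • g x + b • g y := by
      gcongr
      · exact (hg x hx).1 ⟨i, hi, rfl⟩
      · exact (hg y hy).1 ⟨i, hi, rfl⟩

theorem convexOn_of_isLUB_dotProduct {α 𝕜 : Type*} [Fintype α] [CommRing 𝕜] [PartialOrder 𝕜]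
    [IsOrderedRing 𝕜] {B : Set (α → 𝕜)} {g : (α → 𝕜) → 𝕜}
    (hg : ∀ x, IsLUB ((x ⬝ᵥ ·) '' B) (g x)) : ConvexOn 𝕜 Set.univ g :=
  convexOn_of_isLUB (f := fun w x => x ⬝ᵥ w) convex_univ
    (fun w _ => ((dotProductBilin 𝕜 𝕜).flip w).convexOn convex_univ) fun x _ => hg x

section Increments

variable {ι : Type*} [LinearOrder ι] [LocallyFiniteOrderBot ι]

@[elab_as_elim]
theorem lowerSet_induction {p : Finset ι → Prop} (empty : p ∅)
    (Iic_of_Iio : ∀ a, p (Iio a) → p (Iic a)) {s : Finset ι} (hs : IsLowerSet (s : Set ι)) :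
    p s := by
  induction s using Finset.induction_on_max with
  | empty => exact empty
  | insert a t hlt ih =>
    have ht : t = Iio a := by
      ext i
      have hmem : i ≤ a → i ∈ insert a t := fun hi => hs hi (mem_insert_self a t)
      grind
    subst ht
    rw [Iio_insert]
    exact Iic_of_Iio a (ih (by simpa only [coe_Iio] using isLowerSet_Iio a))

theorem sum_Iic_eq_add_sum_Iio {M : Type*} [AddCommMonoid M] (f : ι → M) (a : ι) :
    ∑ i ∈ Iic a, f i = f a + ∑ i ∈ Iio a, f i := by
  rw [← Iio_insert, sum_insert notMem_Iio_self]

theorem sum_Iic_sub_Iio {M : Type*} [AddCommGroup M] (F : Finset ι → M) {s : Finset ι}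
    (hs : IsLowerSet (s : Set ι)) : ∑ k ∈ s, (F (Iic k) - F (Iio k)) = F s - F ∅ := by
  refine lowerSet_induction (by simp) (fun a ih => ?_) hs
  rw [sum_Iic_eq_add_sum_Iio, ih, sub_add_sub_cancel]

theorem sum_Iic_sub_Iio_univ {M : Type*} [AddCommGroup M] [Fintype ι] (F : Finset ι → M) :
    ∑ k, (F (Iic k) - F (Iio k)) = F univ - F ∅ :=
  sum_Iic_sub_Iio F (by simpa only [coe_univ] using isLowerSet_univ)

variable {𝕜 : Type*} [Ring 𝕜] [PartialOrder 𝕜] [IsOrderedRing 𝕜] {f : ι → 𝕜}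
  {F : Finset ι → 𝕜}

theorem mul_le_sum_mul_Iic_sub_Iio (hf : Antitone f) (hF : ∀ s, 0 ≤ F s) (hF_empty : F ∅ = 0)
    {s : Finset ι} (hs : IsLowerSet (s : Set ι)) (c : 𝕜) (hc : ∀ i ∈ s, c ≤ f i) :
    c * F s ≤ ∑ k ∈ s, f k * (F (Iic k) - F (Iio k)) := by
  revert c
  refine lowerSet_induction (by simp [hF_empty]) (fun a ih c hc => ?_) hs
  calc c * F (Iic a) ≤ f a * F (Iic a) :=
        mul_le_mul_of_nonneg_right (hc a (mem_Iic.2 le_rfl)) (hF _)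
    _ = f a * (F (Iic a) - F (Iio a)) + f a * F (Iio a) := by rw [← mul_add, sub_add_cancel]
    _ ≤ f a * (F (Iic a) - F (Iio a)) + ∑ k ∈ Iio a, f k * (F (Iic k) - F (Iio k)) := by
        gcongr
        exact ih _ fun i hi => hf (mem_Iio.1 hi).le
    _ = ∑ k ∈ Iic a, f k * (F (Iic k) - F (Iio k)) := by rw [sum_Iic_eq_add_sum_Iio]

theorem sum_mul_Iic_sub_Iio_nonneg [Fintype ι] (hf : Antitone f) (hF : ∀ s, 0 ≤ F s)
    (hF_empty : F ∅ = 0) (hF_univ : F univ = 0) :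
    0 ≤ ∑ k, f k * (F (Iic k) - F (Iio k)) := by
  rcases isEmpty_or_nonempty ι with _ | _
  · simp
  obtain ⟨m, hm⟩ := Finite.exists_max (id : ι → ι)
  have h := mul_le_sum_mul_Iic_sub_Iio hf hF hF_empty (s := univ)
    (by simpa only [coe_univ] using isLowerSet_univ) (f m) fun i _ => hf (hm i)
  rwa [hF_univ, mul_zero] at h

end Increments

section BasePolytope

/-- The base polytope of a set function `R`: the weights `w` on the ground set whose total weight
is `R univ` and for which no set `S` weighs more than `R S`. -/
def basePolytope {α M : Type*} [Fintype α] [AddCommMonoid M] [LE M] (R : Finset α → M) :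
    Set (α → M) :=
  {w | (∀ S, ∑ j ∈ S, w j ≤ R S) ∧ ∑ j, w j = R univ}

theorem insert_sub_le_insert_sub_of_submodular {α M : Type*} [DecidableEq α] [AddCommGroup M]
    [PartialOrder M] [IsOrderedAddMonoid M] {R : Finset α → M}
    (hsub : ∀ S T, R (S ∪ T) + R (S ∩ T) ≤ R S + R T) {A B : Finset α} (hAB : A ⊆ B) {j : α}
    (hj : j ∉ B) : R (insert j B) - R B ≤ R (insert j A) - R A := by
  have h := hsub (insert j A) B
  rw [insert_union, union_eq_right.2 hAB, insert_inter_of_notMem hj, inter_eq_left.2 hAB] at h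
  rwa [sub_le_sub_iff]

variable {ι α : Type*} [LinearOrder ι] [LocallyFiniteOrderBot ι] [DecidableEq α]

/-- The vector produced by the greedy algorithm for the set function `R`: its `j`-th coordinate is
the increment of `R` when `j` is added to its predecessors in the ordering `σ` of the ground
set. -/
def greedyVector {M : Type*} [Sub M] (R : Finset α → M) (σ : ι ≃ α) (j : α) : M :=
  R ((Iic (σ.symm j)).image σ) - R ((Iio (σ.symm j)).image σ)

theorem greedyVector_apply {M : Type*} [Sub M] (R : Finset α → M) (σ : ι ≃ α) (k : ι) :
    greedyVector R σ (σ k) = R ((Iic k).image σ) - R ((Iio k).image σ) := by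
  rw [greedyVector, σ.symm_apply_apply]

theorem greedyVector_apply_le {M : Type*} [AddCommGroup M] [PartialOrder M]
    [IsOrderedAddMonoid M] {R : Finset α → M}
    (hsub : ∀ S T, R (S ∪ T) + R (S ∩ T) ≤ R S + R T) (σ : ι ≃ α) {S : Finset α} {k : ι}
    (hk : σ k ∈ S) :
    greedyVector R σ (σ k) ≤ R (S ∩ (Iic k).image σ) - R (S ∩ (Iio k).image σ) := by
  rw [greedyVector_apply, ← Iio_insert, image_insert, inter_insert_of_mem hk]
  exact insert_sub_le_insert_sub_of_submodular hsub inter_subset_right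
    (by simp [σ.injective.eq_iff])

theorem sum_greedyVector_le {M : Type*} [AddCommGroup M] [PartialOrder M] [IsOrderedAddMonoid M]
    {R : Finset α → M} (hR0 : R ∅ = 0) (hsub : ∀ S T, R (S ∪ T) + R (S ∩ T) ≤ R S + R T)
    (σ : ι ≃ α) (S : Finset α) : ∑ j ∈ S, greedyVector R σ j ≤ R S := by
  let s := (S.image σ.symm).biUnion Iic
  have hs : IsLowerSet (s : Set ι) := by
    simpa only [s, coe_biUnion, coe_Iic] using isLowerSet_iUnion₂ fun a _ => isLowerSet_Iic a
  have hS : S ∩ s.image σ = S := inter_eq_left.2 fun j hj => mem_image.2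
    ⟨σ.symm j, mem_biUnion.2 ⟨_, mem_image_of_mem _ hj, mem_Iic.2 le_rfl⟩, σ.apply_symm_apply j⟩
  calc ∑ j ∈ S, greedyVector R σ j
      = ∑ k ∈ s, if σ k ∈ S then greedyVector R σ (σ k) else 0 := by
        rw [← sum_image (f := fun j => if j ∈ S then greedyVector R σ j else 0) σ.injective.injOn,
          sum_ite_mem, inter_comm, hS]
    _ ≤ ∑ k ∈ s, (R (S ∩ (Iic k).image σ) - R (S ∩ (Iio k).image σ)) := by
        refine sum_le_sum fun k _ => ?_
        split_ifs with hk
        · exact greedyVector_apply_le hsub σ hk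
        · rw [← Iio_insert, image_insert, inter_insert_of_notMem hk, sub_self]
    _ = R S := by
        rw [sum_Iic_sub_Iio (fun t => R (S ∩ t.image σ)) hs, hS, image_empty, inter_empty, hR0,
          sub_zero]

variable [Fintype α]

theorem sum_greedyVector {M : Type*} [AddCommGroup M] {R : Finset α → M} (hR0 : R ∅ = 0)
    (σ : ι ≃ α) : ∑ j, greedyVector R σ j = R univ := by
  let : Fintype ι := .ofEquiv α σ.symm
  calc ∑ j, greedyVector R σ j = ∑ k, greedyVector R σ (σ k) := (σ.sum_comp _).symm
    _ = ∑ k, (R ((Iic k).image σ) - R ((Iio k).image σ)) := by simp only [greedyVector_apply]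
    _ = R univ := by
      rw [sum_Iic_sub_Iio_univ fun s => R (s.image σ), image_univ_equiv, image_empty, hR0, sub_zero]

theorem greedyVector_mem_basePolytope {M : Type*} [AddCommGroup M] [PartialOrder M]
    [IsOrderedAddMonoid M] {R : Finset α → M} (hR0 : R ∅ = 0)
    (hsub : ∀ S T, R (S ∪ T) + R (S ∩ T) ≤ R S + R T) (σ : ι ≃ α) :
    greedyVector R σ ∈ basePolytope R :=
  ⟨sum_greedyVector_le hR0 hsub σ, sum_greedyVector hR0 σ⟩

variable {𝕜 : Type*} [Ring 𝕜] [PartialOrder 𝕜] [IsOrderedRing 𝕜] {R : Finset α → 𝕜}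
  {x : α → 𝕜} {σ : ι ≃ α}

theorem dotProduct_le_dotProduct_greedyVector (hR0 : R ∅ = 0) (hσ : Antitone (x ∘ σ))
    {w : α → 𝕜} (hw : w ∈ basePolytope R) : x ⬝ᵥ w ≤ x ⬝ᵥ greedyVector R σ := by
  let : Fintype ι := .ofEquiv α σ.symm
  let slack : Finset ι → 𝕜 := fun s => R (s.image σ) - ∑ k ∈ s, w (σ k)
  have slack_nonneg (s : Finset ι) : 0 ≤ slack s := by
    have h := hw.1 (s.image σ)
    rwa [sum_image σ.injective.injOn, ← sub_nonneg] at h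
  have slack_univ : slack univ = 0 := by
    simp only [slack, image_univ_equiv, σ.sum_comp, hw.2, sub_self]
  have slack_increment (k : ι) :
      slack (Iic k) - slack (Iio k) = greedyVector R σ (σ k) - w (σ k) := by
    simp only [slack, sum_Iic_eq_add_sum_Iio, greedyVector_apply]
    abel
  rw [← sub_nonneg, ← dotProduct_sub, dotProduct, ← σ.sum_comp]
  simpa only [slack_increment, Function.comp_apply, Pi.sub_apply] using
    sum_mul_Iic_sub_Iio_nonneg hσ slack_nonneg (by simp [slack, hR0]) slack_univ

theorem isGreatest_dotProduct_greedyVector (hR0 : R ∅ = 0)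
    (hsub : ∀ S T, R (S ∪ T) + R (S ∩ T) ≤ R S + R T) (hσ : Antitone (x ∘ σ)) :
    IsGreatest ((x ⬝ᵥ ·) '' basePolytope R) (x ⬝ᵥ greedyVector R σ) :=
  ⟨⟨_, greedyVector_mem_basePolytope hR0 hsub σ, rfl⟩, Set.forall_mem_image.2 fun _ hw =>
    dotProduct_le_dotProduct_greedyVector hR0 hσ hw⟩

end BasePolytope

theorem lovSum_eq_dotProduct_greedyVector {n : ℕ} (R : Finset (Fin n) → ℝ) (x : Fin n → ℝ)
    (σ : Equiv.Perm (Fin n)) : lovSum R x σ = x ⬝ᵥ greedyVector R σ := by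
  rw [dotProduct, ← Equiv.sum_comp σ]
  simp only [lovSum, greedyVector_apply]

end LovaszExtension

/-- **The Lovász extension of a submodular function is convex.** Let `R` be a submodular set
function on subsets of `{1,…,n}` with `R(∅) = 0`, and let `r` be its Lovász extension (i.e.
`r x` equals the defining sum for every permutation sorting the coordinates of `x` in
nonincreasing order). Then `r` is convex on `ℝ^n`. -/
theorem stmt_9 (n : ℕ) (R : Finset (Fin n) → ℝ) (hR0 : R ∅ = 0)
    (hsub : ∀ S T : Finset (Fin n), R (S ∪ T) + R (S ∩ T) ≤ R S + R T)
    (r : (Fin n → ℝ) → ℝ)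
    (hr : ∀ (x : Fin n → ℝ) (σ : Equiv.Perm (Fin n)),
      (∀ k l : Fin n, k ≤ l → x (σ l) ≤ x (σ k)) → r x = lovSum R x σ) :
    ConvexOn ℝ Set.univ r := by
  refine LovaszExtension.convexOn_of_isLUB_dotProduct (B := LovaszExtension.basePolytope R)
    fun x => ?_
  let σ := Tuple.sort (OrderDual.toDual ∘ x)
  have hσ : Antitone (x ∘ σ) := Tuple.monotone_sort (OrderDual.toDual ∘ x)
  rw [hr x σ fun _ _ h => hσ h, LovaszExtension.lovSum_eq_dotProduct_greedyVector]
  exact (LovaszExtension.isGreatest_dotProduct_greedyVector hR0 hsub hσ).isLUB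
end

section
/- Let R be a monotone submodular set function on subsets of {1,…,n} with R(∅) = 0 and R({i}) > 0 for every singleton {i}. Then the function Ω_sub(x) = r(|x|), where r is the Lovász extension of R and |x| is the vector of absolute values, defines a norm on ℝ^n: Ω_sub(x) ≥ 0 with equality iff x = 0, Ω_sub(λx) = |λ|Ω_sub(x) for all λ ∈ ℝ, and Ω_sub(x + y) ≤ Ω_sub(x) + Ω_sub(y). -/
/-!
By Edmonds' greedy algorithm, the Lovász extension of a submodular function `R` is the support
function of the base polytope: the maximum at `x` is attained at the vector of increments of `R`
along an ordering that sorts `x`. Hence the extension is sublinear. When `R` is monotone these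
increments are nonnegative, so the extension is also monotone, and
`r |x + y| ≤ r (|x| + |y|) ≤ r |x| + r |y|`. Definiteness comes from
`|x i| * R {i} = r (|x i| • 𝟙_{i}) ≤ r |x|`.
-/

open Finset

/-- Submodularity of a set function: `F (S ∪ T) + F (S ∩ T) ≤ F S + F T` for all finite `S`, `T`. -/
def IsSubmodular {α M : Type*} [DecidableEq α] [Add M] [LE M] (F : Finset α → M) : Prop :=
  ∀ S T : Finset α, F (S ∪ T) + F (S ∩ T) ≤ F S + F T

theorem IsSubmodular.comp_image {α β M : Type*} [DecidableEq α] [DecidableEq β] [Add M] [LE M]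
    {F : Finset β → M} (hF : IsSubmodular F) {f : α → β} (hf : Function.Injective f) :
    IsSubmodular fun S => F (S.image f) := fun S T => by
  simpa only [image_union, image_inter S T hf] using hF (S.image f) (T.image f)

section Increments

variable {ι : Type*} [LinearOrder ι]

-- Abel summation, carried out by peeling off the largest index.
theorem mul_sum_le_sum_mul_of_antitoneOn {K : Type*} [Semiring K] [PartialOrder K]
    [IsOrderedRing K] {s : Finset ι} {a d : ι → K} {c : K} (ha : AntitoneOn a s)
    (hc : ∀ i ∈ s, c ≤ a i) (hd : ∀ k ∈ s, 0 ≤ ∑ i ∈ s with i ≤ k, d i) :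
    c * ∑ i ∈ s, d i ≤ ∑ i ∈ s, a i * d i := by
  induction s using Finset.induction_on_max generalizing c with
  | empty => simp
  | insert m s hlt ih =>
    have hm : m ∉ s := fun h => lt_irrefl _ (hlt m h)
    have ih' : a m * ∑ i ∈ s, d i ≤ ∑ i ∈ s, a i * d i := by
      refine ih (ha.mono (coe_subset.2 (subset_insert m s)))
        (fun i hi => ha (mem_insert_of_mem hi) (mem_insert_self m s) (hlt i hi).le)
        fun k hk => ?_
      have h := hd k (mem_insert_of_mem hk)
      rwa [filter_insert, if_neg (hlt k hk).not_ge] at h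
    have htotal : 0 ≤ ∑ i ∈ insert m s, d i := by
      have h := hd m (mem_insert_self m s)
      rwa [filter_true_of_mem fun i hi =>
        (mem_insert.1 hi).elim (fun h => h.le) fun h => (hlt i h).le] at h
    calc c * ∑ i ∈ insert m s, d i
        ≤ a m * ∑ i ∈ insert m s, d i :=
          mul_le_mul_of_nonneg_right (hc m (mem_insert_self m s)) htotal
      _ = a m * d m + a m * ∑ i ∈ s, d i := by rw [sum_insert hm, mul_add]
      _ ≤ a m * d m + ∑ i ∈ s, a i * d i := by gcongr
      _ = ∑ i ∈ insert m s, a i * d i := by rw [sum_insert hm]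

variable [LocallyFiniteOrderBot ι] {G : Type*} [AddCommGroup G]

theorem sum_Iic_sub_Iio_of_isLowerSet (F : Finset ι → G) {T : Finset ι}
    (hT : IsLowerSet (T : Set ι)) : ∑ k ∈ T, (F (Iic k) - F (Iio k)) = F T - F ∅ := by
  induction T using Finset.induction_on_max with
  | empty => simp
  | insert m S hlt ih =>
    have hS : S = Iio m := by
      ext j
      refine ⟨fun h => mem_Iio.2 (hlt j h), fun h => ?_⟩
      have hj : j ∈ insert m S := hT (mem_Iio.1 h).le (mem_insert_self m S)
      exact (mem_insert.1 hj).resolve_left (mem_Iio.1 h).ne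
    have hlower : IsLowerSet (S : Set ι) := by
      rw [hS, coe_Iio]
      exact isLowerSet_Iio m
    rw [sum_insert fun h => lt_irrefl _ (hlt m h), ih hlower, hS, Iio_insert]
    abel

theorem IsSubmodular.sum_Iic_sub_Iio_le [PartialOrder G] [IsOrderedAddMonoid G] {F : Finset ι → G}
    (hF : IsSubmodular F) (T : Finset ι) : ∑ k ∈ T, (F (Iic k) - F (Iio k)) ≤ F T - F ∅ := by
  induction T using Finset.induction_on_max with
  | empty => simp
  | insert m S hlt ih =>
    have hunion : insert m S ∪ Iio m = Iic m := by
      rw [insert_union, union_eq_right.2 fun j hj => mem_Iio.2 (hlt j hj), Iio_insert]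
    have hinter : insert m S ∩ Iio m = S := by
      rw [insert_inter_of_notMem notMem_Iio_self, inter_eq_left.2 fun j hj => mem_Iio.2 (hlt j hj)]
    have hdiminishing : F (Iic m) - F (Iio m) ≤ F (insert m S) - F S := by
      have h := hF (insert m S) (Iio m)
      rw [hunion, hinter] at h
      exact sub_le_sub_iff.2 h
    calc ∑ k ∈ insert m S, (F (Iic k) - F (Iio k))
        = F (Iic m) - F (Iio m) + ∑ k ∈ S, (F (Iic k) - F (Iio k)) :=
          sum_insert fun h => lt_irrefl _ (hlt m h)
      _ ≤ F (insert m S) - F S + (F S - F ∅) := add_le_add hdiminishing ih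
      _ = F (insert m S) - F ∅ := sub_add_sub_cancel ..

end Increments

section BasePolytope

variable {ι α : Type*} [LinearOrder ι] [LocallyFiniteOrderBot ι] [DecidableEq α]
  {R : Finset α → ℝ}

/-- The base polytope of the set function `R`: the weight vectors whose total on each set `S` is at
most `R S`, with equality on the whole ground set. -/
def basePolytope [Fintype α] (R : Finset α → ℝ) : Set (α → ℝ) :=
  {w | (∀ S : Finset α, ∑ i ∈ S, w i ≤ R S) ∧ ∑ i, w i = R univ}

/-- Edmonds' greedy vertex: the weight of an element is the increment of `R` when that element is
added in the ordering `σ`. -/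
def greedyVertex (R : Finset α → ℝ) (σ : ι ≃ α) (i : α) : ℝ :=
  R ((Iic (σ.symm i)).image σ) - R ((Iio (σ.symm i)).image σ)

theorem greedyVertex_nonneg (hR : Monotone R) (σ : ι ≃ α) : 0 ≤ greedyVertex R σ := fun _ =>
  sub_nonneg.2 (hR (image_subset_image Iio_subset_Iic_self))

theorem sum_greedyVertex (R : Finset α → ℝ) (σ : ι ≃ α) (S : Finset α) :
    ∑ i ∈ S, greedyVertex R σ i =
      ∑ k ∈ S.image σ.symm, (R ((Iic k).image σ) - R ((Iio k).image σ)) := by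
  rw [sum_image σ.symm.injective.injOn]
  rfl

theorem sum_greedyVertex_of_isLowerSet (hR0 : R ∅ = 0) (σ : ι ≃ α) {S : Finset α}
    (hS : IsLowerSet (σ ⁻¹' S)) : ∑ i ∈ S, greedyVertex R σ i = R S := by
  have hlower : IsLowerSet (S.image σ.symm : Set ι) := by
    rwa [coe_image, σ.symm.image_eq_preimage_symm]
  rw [sum_greedyVertex, sum_Iic_sub_Iio_of_isLowerSet (fun T => R (T.image σ)) hlower]
  simp [image_image, hR0]

theorem sum_univ_greedyVertex [Fintype α] (hR0 : R ∅ = 0) (σ : ι ≃ α) :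
    ∑ i, greedyVertex R σ i = R univ :=
  sum_greedyVertex_of_isLowerSet hR0 σ (by simp only [coe_univ, Set.preimage_univ, isLowerSet_univ])

theorem greedyVertex_mem_basePolytope [Fintype α] (hR0 : R ∅ = 0) (hR : IsSubmodular R)
    (σ : ι ≃ α) : greedyVertex R σ ∈ basePolytope R := by
  refine ⟨fun S => ?_, sum_univ_greedyVertex hR0 σ⟩
  rw [sum_greedyVertex]
  refine ((hR.comp_image σ.injective).sum_Iic_sub_Iio_le _).trans_eq ?_
  simp [image_image, hR0]

-- Abel summation against `greedyVertex R σ - w`: its sums over initial segments of `σ` are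
-- nonnegative and its total is zero, so the signs of the entries of `x` do not matter.
theorem dotProduct_le_dotProduct_greedyVertex [Fintype α] (hR0 : R ∅ = 0) {x w : α → ℝ}
    (hw : w ∈ basePolytope R) {σ : ι ≃ α} (hσ : Antitone (x ∘ σ)) :
    x ⬝ᵥ w ≤ x ⬝ᵥ greedyVertex R σ := by
  let : Fintype ι := Fintype.ofEquiv α σ.symm
  obtain ⟨c, hc⟩ := (Set.finite_range (x ∘ σ)).bddBelow
  let d : α → ℝ := greedyVertex R σ - w
  have htotal : ∑ k, d (σ k) = 0 := by
    rw [σ.sum_comp d]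
    simp only [d, Pi.sub_apply, sum_sub_distrib, sum_univ_greedyVertex hR0, hw.2, sub_self]
  have hpartial (k : ι) : 0 ≤ ∑ j with j ≤ k, d (σ j) := by
    have hlower : IsLowerSet (σ ⁻¹' ((Iic k).image σ)) := by
      rw [coe_image, Set.preimage_image_eq _ σ.injective, coe_Iic]
      exact isLowerSet_Iic k
    rw [filter_ge_eq_Iic, ← sum_image (f := d) σ.injective.injOn]
    simp only [d, Pi.sub_apply, sum_sub_distrib, sum_greedyVertex_of_isLowerSet hR0 σ hlower]
    exact sub_nonneg.2 (hw.1 _)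
  have habel : c * ∑ k, d (σ k) ≤ ∑ k, x (σ k) * d (σ k) :=
    mul_sum_le_sum_mul_of_antitoneOn (hσ.antitoneOn _) (fun k _ => hc (Set.mem_range_self k))
      fun k _ => hpartial k
  rw [htotal, mul_zero, σ.sum_comp fun i => x i * d i] at habel
  rw [← sub_nonneg, ← dotProduct_sub]
  exact habel

end BasePolytope

theorem exists_perm_antitone_comp {n : ℕ} {α : Type*} [LinearOrder α] (x : Fin n → α) :
    ∃ σ : Equiv.Perm (Fin n), Antitone (x ∘ σ) :=
  ⟨Tuple.sort (OrderDual.toDual ∘ x), Tuple.monotone_sort (OrderDual.toDual ∘ x)⟩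

theorem lovSum_eq_dotProduct_greedyVertex {n : ℕ} (R : Finset (Fin n) → ℝ) (x : Fin n → ℝ)
    (σ : Equiv.Perm (Fin n)) : lovSum R x σ = x ⬝ᵥ greedyVertex R σ := by
  rw [← comp_equiv_dotProduct_comp_equiv _ _ σ]
  simp [lovSum, dotProduct, greedyVertex]

/-- `r` is the Lovász extension of `R`: the defining sum gives `r x` for every ordering that sorts
`x`, ties being broken arbitrarily. -/
def IsLovaszExtension {n : ℕ} (R : Finset (Fin n) → ℝ) (r : (Fin n → ℝ) → ℝ) : Prop :=
  ∀ (x : Fin n → ℝ) (σ : Equiv.Perm (Fin n)), Antitone (x ∘ σ) → r x = lovSum R x σ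

namespace IsLovaszExtension

variable {n : ℕ} {R : Finset (Fin n) → ℝ} {r : (Fin n → ℝ) → ℝ}

theorem map_smul_of_nonneg (hr : IsLovaszExtension R r) {c : ℝ} (hc : 0 ≤ c) (x : Fin n → ℝ) :
    r (c • x) = c * r x := by
  obtain ⟨σ, hσ⟩ := exists_perm_antitone_comp x
  rw [hr x σ hσ, hr (c • x) σ (fun k l hkl => mul_le_mul_of_nonneg_left (hσ hkl) hc)]
  simp only [lovSum_eq_dotProduct_greedyVertex, smul_dotProduct, smul_eq_mul]

theorem map_zero (hr : IsLovaszExtension R r) : r 0 = 0 := by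
  simpa using hr.map_smul_of_nonneg le_rfl 0

theorem map_indicator_one (hr : IsLovaszExtension R r) (hR0 : R ∅ = 0) (S : Finset (Fin n)) :
    r (Set.indicator S 1) = R S := by
  obtain ⟨σ, hσ⟩ := exists_perm_antitone_comp (Set.indicator (S : Set (Fin n)) (1 : Fin n → ℝ))
  have hlower : IsLowerSet (σ ⁻¹' S) := fun k l hlk hk => by
    by_contra hl
    have h := hσ hlk
    rw [Set.mem_preimage] at hk hl
    rw [Function.comp_apply, Function.comp_apply, Set.indicator_of_mem hk,
      Set.indicator_of_notMem hl] at h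
    exact h.not_gt one_pos
  rw [hr _ σ hσ, lovSum_eq_dotProduct_greedyVertex, ← sum_greedyVertex_of_isLowerSet hR0 σ hlower]
  simp [dotProduct, Set.indicator_apply]

theorem dotProduct_le (hr : IsLovaszExtension R r) (hR0 : R ∅ = 0) {w : Fin n → ℝ}
    (hw : w ∈ basePolytope R) (x : Fin n → ℝ) : x ⬝ᵥ w ≤ r x := by
  obtain ⟨σ, hσ⟩ := exists_perm_antitone_comp x
  rw [hr x σ hσ, lovSum_eq_dotProduct_greedyVertex]
  exact dotProduct_le_dotProduct_greedyVertex hR0 hw hσ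

theorem exists_eq_dotProduct_greedyVertex (hr : IsLovaszExtension R r) (x : Fin n → ℝ) :
    ∃ σ : Equiv.Perm (Fin n), r x = x ⬝ᵥ greedyVertex R σ :=
  (exists_perm_antitone_comp x).imp fun σ hσ =>
    (hr x σ hσ).trans (lovSum_eq_dotProduct_greedyVertex R x σ)

theorem map_add_le (hr : IsLovaszExtension R r) (hR0 : R ∅ = 0) (hsub : IsSubmodular R)
    (x y : Fin n → ℝ) : r (x + y) ≤ r x + r y := by
  obtain ⟨σ, hσ⟩ := hr.exists_eq_dotProduct_greedyVertex (x + y)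
  have hmem := greedyVertex_mem_basePolytope hR0 hsub σ
  rw [hσ, add_dotProduct]
  exact add_le_add (hr.dotProduct_le hR0 hmem x) (hr.dotProduct_le hR0 hmem y)

theorem monotone (hr : IsLovaszExtension R r) (hR0 : R ∅ = 0) (hsub : IsSubmodular R)
    (hmono : Monotone R) : Monotone r := fun x y hxy => by
  obtain ⟨σ, hσ⟩ := hr.exists_eq_dotProduct_greedyVertex x
  calc r x = x ⬝ᵥ greedyVertex R σ := hσ
    _ ≤ y ⬝ᵥ greedyVertex R σ :=
      dotProduct_le_dotProduct_of_nonneg_right hxy (greedyVertex_nonneg hmono σ)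
    _ ≤ r y := hr.dotProduct_le hR0 (greedyVertex_mem_basePolytope hR0 hsub σ) y

theorem mul_singleton_le (hr : IsLovaszExtension R r) (hR0 : R ∅ = 0) (hsub : IsSubmodular R)
    (hmono : Monotone R) {x : Fin n → ℝ} (hx : 0 ≤ x) (i : Fin n) : x i * R {i} ≤ r x := by
  have hle : x i • Set.indicator ({i} : Finset (Fin n)) 1 ≤ x := fun j => by
    rcases eq_or_ne j i with rfl | hj
    · simp
    · simpa [hj] using hx j
  calc x i * R {i} = r (x i • Set.indicator ({i} : Finset (Fin n)) 1) := by
        rw [hr.map_smul_of_nonneg (hx i), hr.map_indicator_one hR0]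
    _ ≤ r x := hr.monotone hR0 hsub hmono hle

end IsLovaszExtension

/-- **`Ω_sub(x) = r(|x|)` is a norm.** Let `R` be a monotone submodular set function on
subsets of `{1,…,n}` with `R(∅) = 0` and `R({i}) > 0` for every singleton, and let `r` be
its Lovász extension (i.e. `r x` equals the defining sum for every permutation sorting the
coordinates of `x` in nonincreasing order). Then `Ω_sub(x) = r(|x|)` is nonnegative,
vanishes exactly at `0`, is absolutely homogeneous, and satisfies the triangle
inequality. -/
theorem stmt_13 (n : ℕ) (R : Finset (Fin n) → ℝ) (hR0 : R ∅ = 0)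
    (hmono : ∀ S T : Finset (Fin n), S ⊆ T → R S ≤ R T)
    (hsub : ∀ S T : Finset (Fin n), R (S ∪ T) + R (S ∩ T) ≤ R S + R T)
    (hpos : ∀ i : Fin n, 0 < R {i})
    (r : (Fin n → ℝ) → ℝ)
    (hr : ∀ (x : Fin n → ℝ) (σ : Equiv.Perm (Fin n)),
      (∀ k l : Fin n, k ≤ l → x (σ l) ≤ x (σ k)) → r x = lovSum R x σ) :
    (∀ x : Fin n → ℝ, 0 ≤ r (fun i => |x i|)) ∧
    (∀ x : Fin n → ℝ, r (fun i => |x i|) = 0 ↔ x = 0) ∧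
    (∀ (a : ℝ) (x : Fin n → ℝ),
      r (fun i => |a * x i|) = |a| * r (fun i => |x i|)) ∧
    (∀ x y : Fin n → ℝ,
      r (fun i => |x i + y i|) ≤ r (fun i => |x i|) + r (fun i => |y i|)) := by
  have hsub : IsSubmodular R := hsub
  have hmono : Monotone R := hmono
  have hr : IsLovaszExtension R r := fun x σ hσ => hr x σ fun k l hkl => hσ hkl
  have hr_mono : Monotone r := hr.monotone hR0 hsub hmono
  refine ⟨fun x => ?_, fun x => ⟨fun hx => ?_, ?_⟩, fun a x => ?_, fun x y => ?_⟩
  · exact hr.map_zero.symm.le.trans (hr_mono (abs_nonneg x))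
  · funext i
    have h : |x i| * R {i} ≤ 0 :=
      (hr.mul_singleton_le hR0 hsub hmono (abs_nonneg x) i).trans_eq hx
    exact abs_nonpos_iff.1 (nonpos_of_mul_nonpos_left h (hpos i))
  · rintro rfl
    exact (congrArg r abs_zero).trans hr.map_zero
  · simp only [abs_mul]
    exact hr.map_smul_of_nonneg (abs_nonneg a) |x|
  · calc r |x + y| ≤ r (|x| + |y|) := hr_mono (abs_add_le x y)
      _ ≤ r |x| + r |y| := hr.map_add_le hR0 hsub |x| |y|
end
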